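/- Fix a > 1 and define π_j(s) = X₁(s)·X₂(s)⋯X_j(s). Then for every s ∈ (0, e^{a−1}) the series n̄(s) := (1/2) Σ_{j=1}^{∞} π_j(s) and Σ_{j=1}^{∞} π_j(s)² converge; moreover n̄ is differentiable on (0, e^{a−1}) and, setting W_∞(s) = 1 + (1/8) Σ_{j=1}^{∞} π_j(s)², one has s n̄'(s) − n̄(s)² = 2 ( W_∞(s) − 1 ) for all s ∈ (0, e^{a−1}). -/

import Mathlib

/-!
Logarithmic differentiation of the recursion `X_{k+1} = (a - log X_k)⁻¹` gives
`s X_k' = X_k π_k`, hence `s π_j' = π_j (π_1 + ⋯ + π_j)`. Since `X_1` maps `(0, 1]` into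
`(0, 1/a]`, one has `0 < π_{j+1} ≤ a⁻ʲ` on the whole interval, so `Σ π_j` and its termwise
derivative converge locally uniformly and `s (Σ π_j)' = Σ_j π_j Σ_{i ≤ j} π_i`. The last double sum
over a triangle equals `((Σ π_j)² + Σ π_j²) / 2`, which is the claim.
-/

open MeasureTheory Real Filter Set

noncomputable section

abbrev E3 := EuclideanSpace ℝ (Fin 3)

/-- `i`-th partial derivative of a spinor field. -/
def pd (i : Fin 3) (φ : E3 → ℂ × ℂ) (x : E3) : ℂ × ℂ :=
  fderiv ℝ φ x (EuclideanSpace.single i 1)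

/-- The operator `σ·∇` built from the Pauli matrices. -/
def sigmaGrad (φ : E3 → ℂ × ℂ) (x : E3) : ℂ × ℂ :=
  ((pd 2 φ x).1 + (pd 0 φ x).2 - Complex.I * (pd 1 φ x).2,
   (pd 0 φ x).1 + Complex.I * (pd 1 φ x).1 - (pd 2 φ x).2)

/-- Squared norm of a two-spinor value. -/
def nsq (p : ℂ × ℂ) : ℝ := ‖p.1‖ ^ 2 + ‖p.2‖ ^ 2

/-- Pauli matrix `σ₁` acting on `ℂ²`. -/
def pauli1 (p : ℂ × ℂ) : ℂ × ℂ := (p.2, p.1)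

/-- Pauli matrix `σ₂` acting on `ℂ²`. -/
def pauli2 (p : ℂ × ℂ) : ℂ × ℂ := (-(Complex.I * p.2), Complex.I * p.1)

/-- Pauli matrix `σ₃` acting on `ℂ²`. -/
def pauli3 (p : ℂ × ℂ) : ℂ × ℂ := (p.1, -p.2)

/-- The spin-orbit operator `σ·L`. -/
def sigmaL (φ : E3 → ℂ × ℂ) (x : E3) : ℂ × ℂ :=
  (-Complex.I) •
    (pauli1 ((x 1 : ℂ) • pd 2 φ x - (x 2 : ℂ) • pd 1 φ x) +
     pauli2 ((x 2 : ℂ) • pd 0 φ x - (x 0 : ℂ) • pd 2 φ x) +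
     pauli3 ((x 0 : ℂ) • pd 1 φ x - (x 1 : ℂ) • pd 0 φ x))

/-- `σ·x = σ₁x₁ + σ₂x₂ + σ₃x₃` acting on a spinor value. -/
def sigmaDotX (x : E3) (p : ℂ × ℂ) : ℂ × ℂ :=
  ((x 2 : ℂ) * p.1 + ((x 0 : ℂ) - Complex.I * (x 1 : ℂ)) * p.2,
   ((x 0 : ℂ) + Complex.I * (x 1 : ℂ)) * p.1 - (x 2 : ℂ) * p.2)

/-- Inequality (R8) for a weight `W`, a radius `R` and a constant `C`. -/
def IneqR8 (W : ℝ → ℝ) (R C : ℝ) : Prop :=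
  ∀ φ : E3 → ℂ × ℂ, ContDiff ℝ (⊤ : ℕ∞) φ → HasCompactSupport φ →
    (∫ x : E3, (W ‖x‖ / ‖x‖) * nsq (φ x)) +
        C * (∫ x in Metric.sphere (0 : E3) R, nsq (φ x) ∂μH[2]) ≤
      ∫ x : E3, (nsq (sigmaGrad φ x) / (1 + W ‖x‖ / ‖x‖) + nsq (φ x))

/-- Iterated logarithmic functions: `Xk a 1 = (a - log s)⁻¹`, `Xk a (k+1) = X₁ ∘ Xk a k`. -/
def Xk (a : ℝ) : ℕ → ℝ → ℝ
  | 0, s => s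
  | k + 1, s => (a - Real.log (Xk a k s))⁻¹

/-- `π_j(s) = X₁(s)⋯X_j(s)`. -/
def piX (a : ℝ) (j : ℕ) (s : ℝ) : ℝ := ∏ i ∈ Finset.Icc 1 j, Xk a i s

/-- `Σ_{j=1}^k X₁(s)²⋯X_j(s)²`. -/
def sumX2 (a : ℝ) (k : ℕ) (s : ℝ) : ℝ := ∑ j ∈ Finset.Icc 1 k, (piX a j s) ^ 2

theorem Xk_mem {a s : ℝ} (ha : 1 < a) (hs : s ∈ Set.Ioo 0 (Real.exp (a - 1))) (k : ℕ) :
    Xk a k s ∈ Set.Ioo 0 (Real.exp (a - 1)) ∧ 0 < Xk a (k + 1) s ∧ Xk a (k + 1) s < 1 := by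
  have step : ∀ x ∈ Set.Ioo 0 (Real.exp (a - 1)),
      0 < (a - Real.log x)⁻¹ ∧ (a - Real.log x)⁻¹ < 1 := by
    intro x hx
    have h := (Real.log_lt_iff_lt_exp hx.1).2 hx.2
    exact ⟨inv_pos.2 (by linarith), inv_lt_one_of_one_lt₀ (by linarith)⟩
  induction k with
  | zero => exact ⟨hs, step s hs⟩
  | succ k ih =>
    have h : Xk a (k + 1) s ∈ Set.Ioo 0 (Real.exp (a - 1)) :=
      ⟨ih.2.1, ih.2.2.trans (Real.one_lt_exp_iff.2 (by linarith))⟩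
    exact ⟨h, step _ h⟩

theorem piX_succ (a : ℝ) (j : ℕ) (s : ℝ) : piX a (j + 1) s = piX a j s * Xk a (j + 1) s := by
  simp only [piX]
  rw [Finset.prod_Icc_succ_top (by omega)]

theorem piX_zero (a s : ℝ) : piX a 0 s = 1 := by simp [piX]

/-- From the second iterate on, `X_k = (a - log X_{k-1})⁻¹ ≤ a⁻¹` because `X_{k-1} < 1`; this
makes the series geometrically convergent, uniformly in `s`. -/
theorem piX_bounds {a s : ℝ} (ha : 1 < a) (hs : s ∈ Set.Ioo 0 (Real.exp (a - 1))) (j : ℕ) :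
    0 < piX a (j + 1) s ∧ piX a (j + 1) s ≤ a⁻¹ ^ j := by
  induction j with
  | zero =>
    rw [piX_succ, piX_zero, one_mul, pow_zero]
    exact ⟨(Xk_mem ha hs 0).2.1, (Xk_mem ha hs 0).2.2.le⟩
  | succ j ih =>
    rw [piX_succ, pow_succ]
    have h := (Xk_mem ha hs (j + 1)).2.1
    have hle : Xk a (j + 1 + 1) s ≤ a⁻¹ := by
      have hlog := Real.log_neg (Xk_mem ha hs j).2.1 (Xk_mem ha hs j).2.2
      exact inv_anti₀ (by linarith) (by linarith)
    exact ⟨mul_pos ih.1 h, mul_le_mul ih.2 hle h.le (by positivity)⟩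

theorem hasDerivAt_Xk {a s : ℝ} (ha : 1 < a) (hs : s ∈ Set.Ioo 0 (Real.exp (a - 1))) (k : ℕ) :
    HasDerivAt (Xk a k) (Xk a k s * piX a k s / s) s := by
  have hs0 : s ≠ 0 := hs.1.ne'
  induction k with
  | zero =>
    have e : Xk a 0 s * piX a 0 s / s = 1 := by
      rw [piX_zero, mul_one]; exact div_self hs0
    rw [e]
    exact hasDerivAt_id s
  | succ k ih =>
    have hk := (Xk_mem ha hs k).1.1.ne'
    have hk1 := (Xk_mem ha hs k).2.1
    have hd : a - Real.log (Xk a k s) ≠ 0 := (inv_pos.1 hk1).ne'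
    have h := ((ih.log hk).const_sub a).inv hd
    have e : Xk a (k + 1) s = (a - Real.log (Xk a k s))⁻¹ := rfl
    refine h.congr_deriv ?_
    rw [piX_succ, e]
    field_simp

theorem hasDerivAt_piX {a s : ℝ} (ha : 1 < a) (hs : s ∈ Set.Ioo 0 (Real.exp (a - 1))) (j : ℕ) :
    HasDerivAt (piX a j) (piX a j s * (∑ i ∈ Finset.range j, piX a (i + 1) s) / s) s := by
  induction j with
  | zero =>
    have e : piX a 0 = fun _ => 1 := funext (piX_zero a)
    simpa [e] using hasDerivAt_const s (1 : ℝ)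
  | succ j ih =>
    have e : piX a (j + 1) = fun t => piX a j t * Xk a (j + 1) t := funext (piX_succ a j)
    have h := ih.fun_mul (hasDerivAt_Xk ha hs (j + 1))
    rw [← e] at h
    refine h.congr_deriv ?_
    rw [Finset.sum_range_succ, piX_succ]
    ring

theorem sum_triangle (f : ℕ → ℝ) (n : ℕ) :
    ∑ j ∈ Finset.range n, f j * ∑ i ∈ Finset.range (j + 1), f i =
      ((∑ j ∈ Finset.range n, f j) ^ 2 + ∑ j ∈ Finset.range n, f j ^ 2) / 2 := by
  induction n with
  | zero => simp
  | succ n ih =>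
    rw [Finset.sum_range_succ, ih]
    simp only [Finset.sum_range_succ]
    ring

theorem tsum_triangle {f : ℕ → ℝ} (h1 : Summable f) (h2 : Summable fun j => f j ^ 2)
    (h3 : Summable fun j => f j * ∑ i ∈ Finset.range (j + 1), f i) :
    ∑' j, f j * ∑ i ∈ Finset.range (j + 1), f i = ((∑' j, f j) ^ 2 + ∑' j, f j ^ 2) / 2 := by
  refine tendsto_nhds_unique h3.hasSum.tendsto_sum_nat ?_
  simp only [sum_triangle]
  exact ((h1.hasSum.tendsto_sum_nat.pow 2).add h2.hasSum.tendsto_sum_nat).div_const 2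

theorem nbar_identity (a : ℝ) (ha : 1 < a) :
    ∀ s ∈ Set.Ioo 0 (Real.exp (a - 1)),
      Summable (fun j : ℕ => piX a (j + 1) s) ∧
      Summable (fun j : ℕ => (piX a (j + 1) s) ^ 2) ∧
      DifferentiableAt ℝ (fun t => (1 / 2) * ∑' j : ℕ, piX a (j + 1) t) s ∧
      s * deriv (fun t => (1 / 2) * ∑' j : ℕ, piX a (j + 1) t) s -
          ((1 / 2) * ∑' j : ℕ, piX a (j + 1) s) ^ 2 =
        2 * ((1 + (1 / 8) * ∑' j : ℕ, (piX a (j + 1) s) ^ 2) - 1) := by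
  intro s hs
  have hs0 : 0 < s := hs.1
  have hr0 : 0 ≤ a⁻¹ := by positivity
  have hr1 : a⁻¹ < 1 := inv_lt_one_of_one_lt₀ ha
  have hgeo : Summable fun j : ℕ => a⁻¹ ^ j := summable_geometric_of_lt_one hr0 hr1
  have hsum : Summable fun j : ℕ => piX a (j + 1) s :=
    Summable.of_nonneg_of_le (fun j => (piX_bounds ha hs j).1.le)
      (fun j => (piX_bounds ha hs j).2) hgeo
  have hsq : Summable fun j : ℕ => (piX a (j + 1) s) ^ 2 := by
    refine Summable.of_nonneg_of_le (fun j => sq_nonneg _) (fun j => ?_) hgeo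
    have h := piX_bounds ha hs j
    have h1 : a⁻¹ ^ j ≤ 1 := pow_le_one₀ hr0 hr1.le
    nlinarith [h.1, h.2]
  set C : ℝ := ∑' j : ℕ, a⁻¹ ^ j
  have hC : ∀ t ∈ Set.Ioo 0 (Real.exp (a - 1)), ∀ n : ℕ,
      0 ≤ ∑ i ∈ Finset.range n, piX a (i + 1) t ∧
        ∑ i ∈ Finset.range n, piX a (i + 1) t ≤ C := fun t ht n =>
    ⟨Finset.sum_nonneg fun i _ => (piX_bounds ha ht i).1.le,
      (Finset.sum_le_sum fun i _ => (piX_bounds ha ht i).2).trans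
        (hgeo.sum_le_tsum _ fun i _ => by positivity)⟩
  have hC0 : 0 ≤ C := (hC s hs 0).1.trans (hC s hs 0).2
  -- The factor `1 / t` in the derivative is bounded only away from `0`, so the domination is
  -- carried out on `(s / 2, exp (a - 1))`.
  have hsub : ∀ t ∈ Set.Ioo (s / 2) (Real.exp (a - 1)), t ∈ Set.Ioo 0 (Real.exp (a - 1)) :=
    fun t ht => ⟨by linarith [ht.1], ht.2⟩
  have hsm : s ∈ Set.Ioo (s / 2) (Real.exp (a - 1)) := ⟨by linarith, hs.2⟩
  have hbound : ∀ (j : ℕ), ∀ t ∈ Set.Ioo (s / 2) (Real.exp (a - 1)),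
      ‖piX a (j + 1) t * (∑ i ∈ Finset.range (j + 1), piX a (i + 1) t) / t‖ ≤
        a⁻¹ ^ j * C / (s / 2) := by
    intro j t ht
    have hb := piX_bounds ha (hsub t ht) j
    have hc := hC t (hsub t ht) (j + 1)
    have ht0 := (hsub t ht).1
    rw [Real.norm_of_nonneg (div_nonneg (mul_nonneg hb.1.le hc.1) ht0.le)]
    exact div_le_div₀ (by positivity) (mul_le_mul hb.2 hc.2 hc.1 (by positivity))
      (by positivity) ht.1.le
  have hu : Summable fun j : ℕ => a⁻¹ ^ j * C / (s / 2) := (hgeo.mul_right C).div_const _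
  have hder := (hasDerivAt_tsum_of_isPreconnected hu isOpen_Ioo isPreconnected_Ioo
    (fun j t ht => hasDerivAt_piX ha (hsub t ht) (j + 1)) hbound hsm hsum hsm).const_mul
      (1 / 2 : ℝ)
  have htri : Summable fun j : ℕ =>
      piX a (j + 1) s * ∑ i ∈ Finset.range (j + 1), piX a (i + 1) s := by
    have h := (Summable.of_norm_bounded hu fun j => hbound j s hsm).mul_right s
    simpa only [div_mul_cancel₀ _ hs0.ne'] using h
  refine ⟨hsum, hsq, hder.differentiableAt, ?_⟩
  rw [hder.deriv, tsum_div_const, tsum_triangle hsum hsq htri]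
  field_simp
  ring
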